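/- Let 𝕏_i = (X_i, d_{X_i}, ξ_i), i = 1, 2, be mm-spaces and let (Z, d_Z) be a compact metric space. Let (λ_n)_{n ∈ ℕ} be a sequence of positive reals with λ_n → 0 and for each n let π_n be a minimizer of EW_{λ_n}(𝕏₁, 𝕏₂). Then (π_n) converges weakly, up to a subsequence, to (Id, Id)_#ζ, the pushforward of some ζ ∈ 𝒫(Z) under the diagonal map z ↦ (z, z), where ζ is a fixed-support GW barycenter, i.e., a minimizer of ζ ↦ Σ_{i=1,2} GW²(𝕏_i, (Z, d_Z, ζ)) over ζ ∈ 𝒫(Z). -/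

import Mathlib

/-!
Testing minimality of `π n` against the diagonal plan `(Id, Id)_# ζ'` of an arbitrary competitor
`ζ'` gives `∫ d² dπ n + lam n * (GW²(ξ₁, fst_# π n) + GW²(ξ₂, snd_# π n)) ≤ lam n * F(ζ')`, where
`F(ζ') = GW²(ξ₁, ζ') + GW²(ξ₂, ζ')` (`EWobj_le_of_minimizer`). Hence the transport cost of `π n`
tends to `0`, and the sum of the two GW terms of `π n` is at most `F(ζ')` for every `n`.

Probability measures on a compact metric space form a compact metrizable space, so along a
subsequence `π n` converges weakly together with `1 / (n + 1)`-optimal couplings `γ₁ n`, `γ₂ n` for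
its two GW terms. The limit of `π n` has zero transport cost, so it is concentrated on the diagonal
(`fst_ae_eq_snd_of_cost_eq_zero`) and equals `(Id, Id)_# ζ` with `ζ` its first marginal. The limits
of `γ₁ n`, `γ₂ n` couple `ξ₁`, `ξ₂` with `ζ` (`mem_couplings_of_tendsto`), and the GW objective
`γ ↦ ∬ (d_X - d_Z)² dγ dγ` is weakly continuous (`continuous_GWobj`); therefore `F(ζ) ≤ F(ζ')`.
-/

open MeasureTheory Filter Topology

noncomputable section

/-- The set of couplings (transport plans) between two measures. -/
def couplings {X Y : Type*} [MeasurableSpace X] [MeasurableSpace Y]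
    (μ : Measure X) (ν : Measure Y) : Set (Measure (X × Y)) :=
  {π | π.map Prod.fst = μ ∧ π.map Prod.snd = ν}

/-- Squared Wasserstein-2 distance. -/
noncomputable def W2sq {Z : Type*} [MetricSpace Z] [MeasurableSpace Z]
    (μ ν : Measure Z) : ℝ :=
  ⨅ π : couplings μ ν, ∫ p : Z × Z, dist p.1 p.2 ^ 2 ∂(π.1)

/-- Wasserstein-2 distance. -/
noncomputable def W2 {Z : Type*} [MetricSpace Z] [MeasurableSpace Z]
    (μ ν : Measure Z) : ℝ := Real.sqrt (W2sq μ ν)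

/-- The Gromov--Wasserstein objective of a plan `γ`. -/
noncomputable def GWobj {X Y : Type*} [MetricSpace X] [MetricSpace Y]
    [MeasurableSpace X] [MeasurableSpace Y]
    (γ : Measure (X × Y)) : ℝ :=
  ∫ q : (X × Y) × (X × Y),
    (dist q.1.1 q.2.1 - dist q.1.2 q.2.2) ^ 2 ∂(γ.prod γ)

/-- Squared Gromov--Wasserstein distance between `(X, d_X, ξ)` and `(Y, d_Y, ν)`. -/
noncomputable def GWsq {X Y : Type*} [MetricSpace X] [MetricSpace Y]
    [MeasurableSpace X] [MeasurableSpace Y]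
    (ξ : Measure X) (ν : Measure Y) : ℝ :=
  ⨅ γ : couplings ξ ν, GWobj γ.1

/-- The support of a measure: points all of whose open neighborhoods have positive measure. -/
def msupport {X : Type*} [TopologicalSpace X] [MeasurableSpace X] (ξ : Measure X) : Set X :=
  {x | ∀ U : Set X, IsOpen U → x ∈ U → 0 < ξ U}

/-- Pushforward `I,#ξ` of `ξ` under a map defined on the support of `ξ`. -/
noncomputable def pushSupp {X Z : Type*} [MetricSpace X] [MetricSpace Z]
    [MeasurableSpace X] [MeasurableSpace Z]
    (ξ : Measure X) (I : msupport ξ → Z) : Measure Z :=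
  Measure.map I (Measure.comap Subtype.val ξ)

/-- The objective of the `EW_λ` problem evaluated at a plan `π` on `Z × Z`. -/
noncomputable def EWobj {X₁ X₂ Z : Type*} [MetricSpace X₁] [MetricSpace X₂] [MetricSpace Z]
    [MeasurableSpace X₁] [MeasurableSpace X₂] [MeasurableSpace Z]
    (lam : ℝ) (ξ₁ : Measure X₁) (ξ₂ : Measure X₂) (π : Measure (Z × Z)) : ℝ :=
  (∫ p : Z × Z, dist p.1 p.2 ^ 2 ∂π)
    + lam * (GWsq ξ₁ (π.map Prod.fst) + GWsq ξ₂ (π.map Prod.snd))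

/-- `EW_λ(𝕏₁, 𝕏₂)²`: infimum of the `EW_λ` objective over probability measures on `Z × Z`. -/
noncomputable def EWlamSq {X₁ X₂ : Type*} (Z : Type*) [MetricSpace X₁] [MetricSpace X₂] [MetricSpace Z]
    [MeasurableSpace X₁] [MeasurableSpace X₂] [MeasurableSpace Z]
    (lam : ℝ) (ξ₁ : Measure X₁) (ξ₂ : Measure X₂) : ℝ :=
  ⨅ π : {π : Measure (Z × Z) // IsProbabilityMeasure π}, EWobj lam ξ₁ ξ₂ π.1

/-- `EW(𝕏₁, 𝕏₂)²`: infimum over isometric embeddings of the supports into `Z`. -/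
noncomputable def EWsq {X₁ X₂ : Type*} (Z : Type*) [MetricSpace X₁] [MetricSpace X₂] [MetricSpace Z]
    [MeasurableSpace X₁] [MeasurableSpace X₂] [MeasurableSpace Z]
    (ξ₁ : Measure X₁) (ξ₂ : Measure X₂) : ℝ :=
  ⨅ (I₁ : {f : msupport ξ₁ → Z // Isometry f}) (I₂ : {f : msupport ξ₂ → Z // Isometry f}),
    W2sq (pushSupp ξ₁ I₁.1) (pushSupp ξ₂ I₂.1)

/-- Weak convergence of a sequence of measures. -/
def WeakConv {Z : Type*} [TopologicalSpace Z] [MeasurableSpace Z]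
    (μs : ℕ → Measure Z) (μ : Measure Z) : Prop :=
  ∀ φ : Z → ℝ, Continuous φ →
    Tendsto (fun n => ∫ z, φ z ∂(μs n)) atTop (nhds (∫ z, φ z ∂μ))

section Aux

variable {X Y : Type*} [MetricSpace X] [MetricSpace Y] [MeasurableSpace X] [MeasurableSpace Y]

lemma GWobj_nonneg (γ : Measure (X × Y)) : 0 ≤ GWobj γ :=
  integral_nonneg fun _ => sq_nonneg _

lemma GWsq_nonneg (ξ : Measure X) (ν : Measure Y) : 0 ≤ GWsq ξ ν :=
  Real.iInf_nonneg fun γ => GWobj_nonneg γ.1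

lemma GWsq_le_GWobj {ξ : Measure X} {ν : Measure Y} {γ : Measure (X × Y)}
    (hγ : γ ∈ couplings ξ ν) : GWsq ξ ν ≤ GWobj γ :=
  ciInf_le ⟨0, by rintro _ ⟨γ', rfl⟩; exact GWobj_nonneg γ'.1⟩ (⟨γ, hγ⟩ : couplings ξ ν)

/-- Couplings of a probability measure `ξ` are automatically probability measures, so the
nonempty infimum defining `GWsq` can be approached up to `ε` by a `ProbabilityMeasure`. -/
lemma exists_coupling_GWobj_lt (ξ : Measure X) (ν : Measure Y) [IsProbabilityMeasure ξ]
    [IsProbabilityMeasure ν] {ε : ℝ} (hε : 0 < ε) :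
    ∃ γ : ProbabilityMeasure (X × Y), (γ : Measure (X × Y)) ∈ couplings ξ ν ∧
      GWobj (γ : Measure (X × Y)) < GWsq ξ ν + ε := by
  have : Nonempty (couplings ξ ν) := ⟨⟨ξ.prod ν, by simp [couplings]⟩⟩
  obtain ⟨⟨γ, hγ⟩, h⟩ := exists_lt_of_ciInf_lt (lt_add_of_pos_right (GWsq ξ ν) hε)
  have hp : IsProbabilityMeasure (γ.map Prod.fst) := by rw [hγ.1]; infer_instance
  exact ⟨⟨γ, (Measure.isProbabilityMeasure_map_iff measurable_fst.aemeasurable).1 hp⟩, hγ, h⟩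

/-- Minimality of `π` tested against the diagonal plan `(Id, Id)_# ζ'`, whose transport cost
is zero. -/
lemma EWobj_le_of_minimizer {Z : Type*} [MetricSpace Z] [CompactSpace Z] [MeasurableSpace Z]
    [BorelSpace Z] {ξ₁ : Measure X} {ξ₂ : Measure Y} {l : ℝ} (hl : 0 < l) {π : Measure (Z × Z)}
    (hmin : EWobj l ξ₁ ξ₂ π = EWlamSq Z l ξ₁ ξ₂) (ζ' : Measure Z) [IsProbabilityMeasure ζ'] :
    EWobj l ξ₁ ξ₂ π ≤ l * (GWsq ξ₁ ζ' + GWsq ξ₂ ζ') := by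
  have hm : Measurable fun z : Z => (z, z) := by fun_prop
  have hd : EWobj l ξ₁ ξ₂ (ζ'.map fun z => (z, z)) = l * (GWsq ξ₁ ζ' + GWsq ξ₂ ζ') := by
    have hc : Continuous fun p : Z × Z => dist p.1 p.2 ^ 2 := by fun_prop
    rw [EWobj, integral_map hm.aemeasurable hc.aestronglyMeasurable,
      Measure.map_map measurable_fst hm, Measure.map_map measurable_snd hm]
    simp [Function.comp_def]
  rw [hmin, ← hd]
  refine ciInf_le (f := fun π : {π : Measure (Z × Z) // IsProbabilityMeasure π} =>
    EWobj l ξ₁ ξ₂ π.1) ⟨0, ?_⟩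
    ⟨ζ'.map fun z => (z, z), Measure.isProbabilityMeasure_map hm.aemeasurable⟩
  rintro _ ⟨π', rfl⟩
  exact add_nonneg (integral_nonneg fun _ => sq_nonneg _)
    (mul_nonneg hl.le (add_nonneg (GWsq_nonneg _ _) (GWsq_nonneg _ _)))

variable [CompactSpace X] [CompactSpace Y] [BorelSpace X] [BorelSpace Y]

lemma continuous_integral_probabilityMeasure {f : X → ℝ} (hf : Continuous f) :
    Continuous fun μ : ProbabilityMeasure X => ∫ x, f x ∂(μ : Measure X) :=
  ProbabilityMeasure.continuous_integral_boundedContinuousFunction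
    (BoundedContinuousFunction.mkOfCompact ⟨f, hf⟩)

lemma continuous_GWobj :
    Continuous fun γ : ProbabilityMeasure (X × Y) => GWobj (γ : Measure (X × Y)) := by
  have hf : Continuous fun q : (X × Y) × (X × Y) =>
      (dist q.1.1 q.2.1 - dist q.1.2 q.2.2) ^ 2 := by fun_prop
  have hd : Continuous fun γ : ProbabilityMeasure (X × Y) => γ.prod γ :=
    ProbabilityMeasure.continuous_prod.comp (continuous_id.prodMk continuous_id)
  exact (continuous_integral_probabilityMeasure hf).comp hd

set_option linter.unusedSectionVars false in
/-- The marginal constraints are closed under weak convergence. -/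
lemma mem_couplings_of_tendsto {ξ : ProbabilityMeasure X} {ν : ℕ → ProbabilityMeasure Y}
    {ν' : ProbabilityMeasure Y} {γ : ℕ → ProbabilityMeasure (X × Y)}
    {γ' : ProbabilityMeasure (X × Y)}
    (hγ : ∀ n, (γ n : Measure (X × Y)) ∈ couplings (ξ : Measure X) (ν n : Measure Y))
    (hγt : Tendsto γ atTop (𝓝 γ')) (hνt : Tendsto ν atTop (𝓝 ν')) :
    (γ' : Measure (X × Y)) ∈ couplings (ξ : Measure X) (ν' : Measure Y) := by
  have h1 := ((ProbabilityMeasure.continuous_map (continuous_fst (X := X) (Y := Y))).tendsto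
    γ').comp hγt
  have h2 := ((ProbabilityMeasure.continuous_map (continuous_snd (X := X) (Y := Y))).tendsto
    γ').comp hγt
  have e1 : ∀ n, (γ n).map (continuous_fst.measurable.aemeasurable) = ξ :=
    fun n => Subtype.ext (hγ n).1
  have e2 : ∀ n, (γ n).map (continuous_snd.measurable.aemeasurable) = ν n :=
    fun n => Subtype.ext (hγ n).2
  have hfst : γ'.map (continuous_fst.measurable.aemeasurable) = ξ :=
    tendsto_nhds_unique h1 (tendsto_const_nhds.congr fun n => (e1 n).symm)
  have hsnd : γ'.map (continuous_snd.measurable.aemeasurable) = ν' :=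
    tendsto_nhds_unique h2 (hνt.congr fun n => (e2 n).symm)
  exact ⟨congrArg Subtype.val hfst, congrArg Subtype.val hsnd⟩

/-- A plan with zero transport cost is concentrated on the diagonal. -/
lemma fst_ae_eq_snd_of_cost_eq_zero {μ : Measure (X × X)} [IsFiniteMeasure μ]
    (h : ∫ p : X × X, dist p.1 p.2 ^ 2 ∂μ = 0) :
    (Prod.fst : X × X → X) =ᵐ[μ] Prod.snd := by
  have hc : Continuous fun p : X × X => dist p.1 p.2 ^ 2 := by fun_prop
  have hi : Integrable (fun p : X × X => dist p.1 p.2 ^ 2) μ :=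
    hc.integrable_of_hasCompactSupport (HasCompactSupport.of_compactSpace _)
  have h0 := (integral_eq_zero_iff_of_nonneg (fun _ => sq_nonneg _) hi).1 h
  filter_upwards [h0] with p hp
  exact dist_eq_zero.1 (pow_eq_zero_iff two_ne_zero |>.1 hp)

end Aux

theorem stmt13
    {X₁ X₂ Z : Type*} [MetricSpace X₁] [CompactSpace X₁] [MetricSpace X₂] [CompactSpace X₂]
    [MetricSpace Z] [CompactSpace Z]
    [MeasurableSpace X₁] [BorelSpace X₁] [MeasurableSpace X₂] [BorelSpace X₂]
    [MeasurableSpace Z] [BorelSpace Z]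
    (ξ₁ : Measure X₁) (ξ₂ : Measure X₂) [IsProbabilityMeasure ξ₁] [IsProbabilityMeasure ξ₂]
    (lam : ℕ → ℝ) (hpos : ∀ n, 0 < lam n) (hlam : Tendsto lam atTop (nhds 0))
    (π : ℕ → Measure (Z × Z)) (hprob : ∀ n, IsProbabilityMeasure (π n))
    (hmin : ∀ n, EWobj (lam n) ξ₁ ξ₂ (π n) = EWlamSq Z (lam n) ξ₁ ξ₂) :
    ∃ φ : ℕ → ℕ, StrictMono φ ∧
      ∃ ζ : Measure Z, IsProbabilityMeasure ζ ∧
        WeakConv (fun n => π (φ n)) (ζ.map fun z => (z, z)) ∧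
        (∀ ζ' : Measure Z, IsProbabilityMeasure ζ' →
          GWsq ξ₁ ζ + GWsq ξ₂ ζ ≤ GWsq ξ₁ ζ' + GWsq ξ₂ ζ') := by
  have hGm : ∀ n, IsProbabilityMeasure ((π n).map Prod.fst) :=
    fun n => Measure.isProbabilityMeasure_map measurable_fst.aemeasurable
  have hGm' : ∀ n, IsProbabilityMeasure ((π n).map Prod.snd) :=
    fun n => Measure.isProbabilityMeasure_map measurable_snd.aemeasurable
  have hε : ∀ n : ℕ, (0 : ℝ) < 1 / ((n : ℝ) + 1) := fun n => by positivity
  choose γ₁ hγ₁ hγ₁' using fun n => exists_coupling_GWobj_lt ξ₁ ((π n).map Prod.fst) (hε n)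
  choose γ₂ hγ₂ hγ₂' using fun n => exists_coupling_GWobj_lt ξ₂ ((π n).map Prod.snd) (hε n)
  let P : ℕ → ProbabilityMeasure (Z × Z) := fun n => ⟨π n, hprob n⟩
  obtain ⟨⟨Q, δ₁, δ₂⟩, φ, hφ, hlim⟩ := CompactSpace.tendsto_subseq fun n => (P n, γ₁ n, γ₂ n)
  have hP : Tendsto (fun n => P (φ n)) atTop (𝓝 Q) := hlim.fst_nhds
  have h₁ : Tendsto (fun n => γ₁ (φ n)) atTop (𝓝 δ₁) := hlim.snd_nhds.fst_nhds
  have h₂ : Tendsto (fun n => γ₂ (φ n)) atTop (𝓝 δ₂) := hlim.snd_nhds.snd_nhds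
  have hφt : Tendsto φ atTop atTop := hφ.tendsto_atTop
  have hlamφ : Tendsto (fun n => lam (φ n)) atTop (𝓝 0) := hlam.comp hφt
  have hQ₁ : Tendsto (fun n => (P (φ n)).map continuous_fst.measurable.aemeasurable) atTop
      (𝓝 (Q.map continuous_fst.measurable.aemeasurable)) :=
    ((ProbabilityMeasure.continuous_map continuous_fst).tendsto Q).comp hP
  have hQ₂ : Tendsto (fun n => (P (φ n)).map continuous_snd.measurable.aemeasurable) atTop
      (𝓝 (Q.map continuous_snd.measurable.aemeasurable)) :=
    ((ProbabilityMeasure.continuous_map continuous_snd).tendsto Q).comp hP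
  have hδ₁ := mem_couplings_of_tendsto (ξ := ⟨ξ₁, inferInstance⟩)
    (γ := fun n => γ₁ (φ n))
    (ν := fun n => (P (φ n)).map continuous_fst.measurable.aemeasurable)
    (fun n => hγ₁ (φ n)) h₁ hQ₁
  have hδ₂ := mem_couplings_of_tendsto (ξ := ⟨ξ₂, inferInstance⟩)
    (γ := fun n => γ₂ (φ n))
    (ν := fun n => (P (φ n)).map continuous_snd.measurable.aemeasurable)
    (fun n => hγ₂ (φ n)) h₂ hQ₂
  let ζ : Measure Z := (Q : Measure (Z × Z)).map Prod.fst
  have hζ : IsProbabilityMeasure ζ :=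
    Measure.isProbabilityMeasure_map measurable_fst.aemeasurable
  have hcost_nonneg : ∀ n, 0 ≤ ∫ p : Z × Z, dist p.1 p.2 ^ 2 ∂(π n) :=
    fun n => integral_nonneg fun _ => sq_nonneg _
  have hcost : ∫ p : Z × Z, dist p.1 p.2 ^ 2 ∂(Q : Measure (Z × Z)) = 0 := by
    have hc : Continuous fun p : Z × Z => dist p.1 p.2 ^ 2 := by fun_prop
    have ht := ((continuous_integral_probabilityMeasure hc).tendsto Q).comp hP
    refine tendsto_nhds_unique ht ?_
    -- any competitor serves to show that the costs are `O(lam n)`; here it is `ζ`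
    have hub : Tendsto (fun n => lam (φ n) * (GWsq ξ₁ ζ + GWsq ξ₂ ζ)) atTop (𝓝 0) := by
      simpa using hlamφ.mul_const (GWsq ξ₁ ζ + GWsq ξ₂ ζ)
    refine squeeze_zero (fun n => hcost_nonneg (φ n)) (fun n => ?_) hub
    have h := EWobj_le_of_minimizer (hpos (φ n)) (hmin (φ n)) ζ
    have hnn := mul_nonneg (hpos (φ n)).le
      (add_nonneg (GWsq_nonneg ξ₁ ((π (φ n)).map Prod.fst))
        (GWsq_nonneg ξ₂ ((π (φ n)).map Prod.snd)))
    rw [EWobj] at h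
    change ∫ p : Z × Z, dist p.1 p.2 ^ 2 ∂(π (φ n)) ≤ _
    linarith
  have hae := fst_ae_eq_snd_of_cost_eq_zero hcost
  have hsnd : (Q : Measure (Z × Z)).map Prod.snd = ζ := (Measure.map_congr hae).symm
  have hdiag : (ζ.map fun z => (z, z)) = (Q : Measure (Z × Z)) := by
    have hm : Measurable fun z : Z => (z, z) := by fun_prop
    rw [Measure.map_map hm measurable_fst]
    conv_rhs => rw [← Measure.map_id (μ := (Q : Measure (Z × Z)))]
    refine Measure.map_congr ?_
    filter_upwards [hae] with p hp
    exact Prod.ext rfl hp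
  refine ⟨φ, hφ, ζ, hζ, ?_, ?_⟩
  · intro f hf
    rw [hdiag]
    exact ((continuous_integral_probabilityMeasure hf).tendsto Q).comp hP
  · intro ζ' hζ'
    have hle₁ : GWsq ξ₁ ζ ≤ GWobj (δ₁ : Measure (X₁ × Z)) := GWsq_le_GWobj hδ₁
    have hle₂ : GWsq ξ₂ ζ ≤ GWobj (δ₂ : Measure (X₂ × Z)) := by
      rw [← hsnd]; exact GWsq_le_GWobj hδ₂
    have ht := ((continuous_GWobj.tendsto δ₁).comp h₁).add ((continuous_GWobj.tendsto δ₂).comp h₂)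
    have hinv : Tendsto (fun n => 1 / ((φ n : ℝ) + 1)) atTop (𝓝 0) :=
      tendsto_one_div_add_atTop_nhds_zero_nat.comp hφt
    have hub : Tendsto (fun n => GWsq ξ₁ ζ' + GWsq ξ₂ ζ' +
        (1 / ((φ n : ℝ) + 1) + 1 / ((φ n : ℝ) + 1))) atTop (𝓝 (GWsq ξ₁ ζ' + GWsq ξ₂ ζ')) := by
      simpa using (hinv.add hinv).const_add (GWsq ξ₁ ζ' + GWsq ξ₂ ζ')
    refine (add_le_add hle₁ hle₂).trans (le_of_tendsto_of_tendsto' ht hub fun n => ?_)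
    have h := EWobj_le_of_minimizer (hpos (φ n)) (hmin (φ n)) ζ'
    rw [EWobj] at h
    -- dropping the transport cost and dividing by `lam (φ n) > 0`
    have h' : GWsq ξ₁ ((π (φ n)).map Prod.fst) + GWsq ξ₂ ((π (φ n)).map Prod.snd)
        ≤ GWsq ξ₁ ζ' + GWsq ξ₂ ζ' :=
      le_of_mul_le_mul_left (by linarith [hcost_nonneg (φ n)]) (hpos (φ n))
    have ha := hγ₁' (φ n)
    have hb := hγ₂' (φ n)
    simp only [Function.comp_apply]
    linarith
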